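/- Translation correctness for the sliding-interval pattern 'whenever Ψ1 occurs, Ψ2 occurs within [a,b]': let π be a finite timed trace, Ψ1, Ψ2 state predicates on S, and 0 ≤ a ≤ b ≤ k. Assume that for every index i with t_i ≤ t_0 + (k − b) there is an index m with t_m = t_i + a. Then π ⊨ G_{≤k−b}(Ψ1 ⟹ X_{≤a} F_{≤b−a} Ψ2) if and only if for every index i with t_i ≤ t_0 + (k − b) at which Ψ1(s_i) holds, there exists an index j with t_i + a ≤ t_j ≤ t_i + b such that Ψ2(s_j). -/

import Mathlib

/-- A finite timed trace: states `s 0, …, s n` with strictly increasing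
time stamps `t 0 < t 1 < ⋯ < t n`. -/
structure TTrace (S : Type*) where
  n : ℕ
  s : ℕ → S
  t : ℕ → ℝ
  mono : ∀ i, i < n → t i < t (i + 1)

/-- The suffix `π^i` of a timed trace. -/
def TTrace.suffix {S : Type*} (π : TTrace S) (i : ℕ) : TTrace S where
  n := π.n - i
  s := fun j => π.s (i + j)
  t := fun j => π.t (i + j)
  mono := fun j hj => π.mono (i + j) (by omega)

/-- A trace property is a predicate on timed traces. -/
abbrev TraceProp (S : Type*) := TTrace S → Prop

/-- A state predicate regarded as a trace property: it holds on `π` iff it holds in `s 0`. -/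
def statePred {S : Type*} (Ψ : S → Prop) : TraceProp S := fun π => Ψ (π.s 0)

/-- `π ⊨ G_{≤k} Φ` iff `π^i ⊨ Φ` for every index `i` with `t i ≤ t 0 + k`. -/
def Gle {S : Type*} (k : ℝ) (Φ : TraceProp S) : TraceProp S := fun π =>
  ∀ i, i ≤ π.n → π.t i ≤ π.t 0 + k → Φ (π.suffix i)

/-- `π ⊨ F_{≤k} Φ` iff `π^i ⊨ Φ` for some index `i` with `t i ≤ t 0 + k`. -/
def Fle {S : Type*} (k : ℝ) (Φ : TraceProp S) : TraceProp S := fun π =>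
  ∃ i, i ≤ π.n ∧ π.t i ≤ π.t 0 + k ∧ Φ (π.suffix i)

/-- `π ⊨ X_{≤k} Φ` iff `π^m ⊨ Φ` for `m` the largest index with `t m ≤ t 0 + k`. -/
noncomputable def Xle {S : Type*} (k : ℝ) (Φ : TraceProp S) : TraceProp S := fun π =>
  Φ (π.suffix (@Nat.findGreatest (fun i => π.t i ≤ π.t 0 + k) (Classical.decPred _) π.n))

def pImp {S : Type*} (Φ1 Φ2 : TraceProp S) : TraceProp S := fun π => Φ1 π → Φ2 π
def pNot {S : Type*} (Φ : TraceProp S) : TraceProp S := fun π => ¬ Φ π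
def pAnd {S : Type*} (Φ1 Φ2 : TraceProp S) : TraceProp S := fun π => Φ1 π ∧ Φ2 π
def pOr {S : Type*} (Φ1 Φ2 : TraceProp S) : TraceProp S := fun π => Φ1 π ∨ Φ2 π
def pTrue {S : Type*} : TraceProp S := fun _ => True
def pFalse {S : Type*} : TraceProp S := fun _ => False

theorem TTrace.t_lt {S : Type*} (π : TTrace S) (i j : ℕ) (hij : i < j) (hj : j ≤ π.n) :
    π.t i < π.t j := by
  induction j, hij using Nat.le_induction with
  | base => exact π.mono i (by omega)
  | succ j h ih => exact (ih (by omega)).trans (π.mono j (by omega))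

theorem TTrace.t_le {S : Type*} (π : TTrace S) (i j : ℕ) (hij : i ≤ j) (hj : j ≤ π.n) :
    π.t i ≤ π.t j := by
  rcases hij.eq_or_lt with h | h
  · rw [h]
  · exact (π.t_lt i j h hj).le

theorem TTrace.le_of_t_le {S : Type*} (π : TTrace S) (i j : ℕ) (hi : i ≤ π.n)
    (h : π.t i ≤ π.t j) : i ≤ j := by
  by_contra hc
  have := π.t_lt j i (by omega) hi
  linarith

theorem TTrace.xle_iff {S : Type*} (π : TTrace S) (a : ℝ) (ha : 0 ≤ a) (Φ : TraceProp S)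
    (i m : ℕ) (hi : i ≤ π.n) (hm : m ≤ π.n) (h : π.t m = π.t i + a) :
    i ≤ m ∧ (Xle a Φ (π.suffix i) ↔ Φ ((π.suffix i).suffix (m - i))) := by
  have him : i ≤ m := π.le_of_t_le i m hi (by linarith)
  refine ⟨him, ?_⟩
  unfold Xle
  have key : @Nat.findGreatest (fun j => (π.suffix i).t j ≤ (π.suffix i).t 0 + a)
      (Classical.decPred _) (π.suffix i).n = m - i := by
    rw [@Nat.findGreatest_eq_iff]
    simp only [TTrace.suffix, Nat.add_zero]
    refine ⟨by omega, fun _ => ?_, fun j hj hjn hc => ?_⟩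
    · rw [Nat.add_sub_cancel' him, h]
    · have := π.t_lt m (i + j) (by omega) (by omega)
      linarith
  rw [key]

/-- translation correctness for the sliding-interval pattern
'whenever Ψ1 occurs, Ψ2 occurs within [a,b]':
`π ⊨ G_{≤k−b}(Ψ1 ⟹ X_{≤a} F_{≤b−a} Ψ2)` iff for every index `i` with
`t i ≤ t 0 + (k − b)` at which `Ψ1 (s i)` holds, there exists an index `j` with
`t i + a ≤ t j ≤ t i + b` such that `Ψ2 (s j)`. -/
theorem pattern_sliding_occurs_within {S : Type*} (π : TTrace S)
    (Ψ1 Ψ2 : S → Prop) (a b k : ℝ) (ha : 0 ≤ a) (hab : a ≤ b) (hbk : b ≤ k)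
    (hm : ∀ i, i ≤ π.n → π.t i ≤ π.t 0 + (k - b) →
            ∃ m, m ≤ π.n ∧ π.t m = π.t i + a) :
    Gle (k - b) (pImp (statePred Ψ1) (Xle a (Fle (b - a) (statePred Ψ2)))) π ↔
      ∀ i, i ≤ π.n → π.t i ≤ π.t 0 + (k - b) → Ψ1 (π.s i) →
        ∃ j, j ≤ π.n ∧ π.t i + a ≤ π.t j ∧ π.t j ≤ π.t i + b ∧ Ψ2 (π.s j) := by
  unfold Gle
  refine forall_congr' fun i => forall_congr' fun hi => forall_congr' fun hti => ?_
  obtain ⟨m, hmn, hmt⟩ := hm i hi hti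
  obtain ⟨him, hx⟩ := π.xle_iff a ha (Fle (b - a) (statePred Ψ2)) i m hi hmn hmt
  unfold pImp
  rw [hx]
  refine imp_congr Iff.rfl ?_
  simp only [Fle, statePred, TTrace.suffix, Nat.add_zero, ← Nat.add_assoc,
    Nat.add_sub_cancel' him]
  constructor
  · rintro ⟨j, hj, hjt, hP⟩
    have := π.t_le m (m + j) (by omega) (by omega)
    exact ⟨m + j, by omega, by linarith, by linarith, hP⟩
  · rintro ⟨j, hj, h1, h2, hP⟩
    have hmj := π.le_of_t_le m j hmn (by linarith)
    refine ⟨j - m, by omega, ?_, ?_⟩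
    · rw [Nat.add_sub_cancel' hmj]; linarith
    · rwa [Nat.add_sub_cancel' hmj]
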